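/- Let S be a right coherent monoid, let M be a subsemigroup of S which has an identity element e, and let E ⊆ E(S) be a set of idempotents of S such that: (a) e ∈ E; (b) the relation ~H_E is a right congruence on S; (c) M is exactly the ~H_E-class of e; and (d) for any u, v ∈ S, if e ~R_E u and u ~H_E v, then there exist p, q ∈ S with u = u(pq), v = v(pq), and up, vp ∈ M. Then M, regarded as a monoid with identity e, is right coherent. -/

import Mathlib

def IsRightCongruence {M : Type*} [Monoid M] (r : M → M → Prop) : Prop :=
  Equivalence r ∧ ∀ a b c : M, r a b → r (a * c) (b * c)

def RCongGenBy {M : Type*} [Monoid M] (H : Set (M × M)) (r : M → M → Prop) : Prop :=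
  IsRightCongruence r ∧ (∀ p ∈ H, r p.1 p.2) ∧
    ∀ r' : M → M → Prop, IsRightCongruence r' → (∀ p ∈ H, r' p.1 p.2) →
      ∀ x y : M, r x y → r' x y

def FGRightCongruence {M : Type*} [Monoid M] (r : M → M → Prop) : Prop :=
  ∃ H : Set (M × M), H.Finite ∧ RCongGenBy H r

def RightCoherent (M : Type*) [Monoid M] : Prop :=
  ∀ r : M → M → Prop, FGRightCongruence r → ∀ a b : M,
    (∃ C : Finset M,
      {x : M | (∃ s : M, r x (a * s)) ∧ (∃ t : M, r x (b * t))} =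
        ⋃ c ∈ C, {x : M | ∃ s : M, r x (c * s)}) ∧
    FGRightCongruence (fun u v : M => r (a * u) (a * v))

theorem exists_rcongGenBy {M : Type*} [Monoid M] (H : Set (M × M)) :
    ∃ r : M → M → Prop, RCongGenBy H r := by
  refine ⟨fun x y => ∀ r' : M → M → Prop, IsRightCongruence r' → (∀ p ∈ H, r' p.1 p.2) → r' x y,
    ⟨⟨⟨?_, ?_, ?_⟩, ?_⟩, ?_, ?_⟩⟩
  · intro x r' h _
    exact h.1.refl x
  · intro x y h r' h1 h2
    exact h1.1.symm (h r' h1 h2)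
  · intro x y z h h' r' h1 h2
    exact h1.1.trans (h r' h1 h2) (h' r' h1 h2)
  · intro a b c h r' h1 h2
    exact h1.2 a b c (h r' h1 h2)
  · intro p hp r' h1 h2
    exact h2 p hp
  · intro r' h1 h2 x y h
    exact h r' h1 h2

theorem stmt11 {S : Type*} [Monoid S] (hS : RightCoherent S)
    (M : Set S)
    (hclosed : ∀ a ∈ M, ∀ b ∈ M, a * b ∈ M)
    (e : S) (he : e ∈ M)
    (hel : ∀ a ∈ M, e * a = a) (her : ∀ a ∈ M, a * e = a)
    (E : Set S) (hidem : ∀ f ∈ E, f * f = f)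
    (heE : e ∈ E)
    (hHcong : IsRightCongruence (fun u v : S =>
      (∀ f ∈ E, (f * u = u ↔ f * v = v)) ∧ (∀ f ∈ E, (u * f = u ↔ v * f = v))))
    (hMclass : M = {x : S |
      (∀ f ∈ E, (f * e = e ↔ f * x = x)) ∧ (∀ f ∈ E, (e * f = e ↔ x * f = x))})
    (hd : ∀ u v : S,
      (∀ f ∈ E, (f * e = e ↔ f * u = u)) →
      ((∀ f ∈ E, (f * u = u ↔ f * v = v)) ∧ (∀ f ∈ E, (u * f = u ↔ v * f = v))) →
      ∃ p q : S, u = u * (p * q) ∧ v = v * (p * q) ∧ u * p ∈ M ∧ v * p ∈ M)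
    (N : Type*) [Monoid N] (φ : N → S)
    (hinj : Function.Injective φ) (hrange : Set.range φ = M)
    (hmulφ : ∀ x y : N, φ (x * y) = φ x * φ y) (h1φ : φ 1 = e) :
    RightCoherent N := by
  classical
  obtain ⟨H, hH⟩ : ∃ H : S → S → Prop, H = fun u v : S =>
      (∀ f ∈ E, (f * u = u ↔ f * v = v)) ∧ (∀ f ∈ E, (u * f = u ↔ v * f = v)) := ⟨_, rfl⟩
  have hd' : ∀ u v : S, (∀ f ∈ E, (f * e = e ↔ f * u = u)) → H u v →
      ∃ p q : S, u = u * (p * q) ∧ v = v * (p * q) ∧ u * p ∈ M ∧ v * p ∈ M := by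
    rw [hH]; exact hd
  rw [← hH] at hHcong
  have hM : ∀ x, x ∈ M ↔ H e x := by
    intro x
    rw [hMclass, hH]; rfl
  have hMR : ∀ x ∈ M, ∀ f ∈ E, (f * e = e ↔ f * x = x) := by
    intro x hx
    rw [hMclass] at hx
    exact hx.1
  have hMtrans : ∀ x y, H x y → x ∈ M → y ∈ M := by
    intro x y h hx
    rw [hM] at hx ⊢
    exact hHcong.1.trans hx h
  have key1 : ∀ a ∈ M, ∀ t, H (e * t) (a * t) := fun a ha t =>
    hHcong.2 _ _ t ((hM a).1 ha)
  have key : ∀ a ∈ M, ∀ t, a * t ∈ M → e * t ∈ M := fun a ha t h =>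
    hMtrans _ _ (hHcong.1.symm (key1 a ha t)) h
  have key' : ∀ a ∈ M, ∀ t, a * t = a * (e * t) := fun a ha t => by
    rw [← mul_assoc, her a ha]
  have hR : ∀ u s, e * u = u → u * s ∈ M → ∀ f ∈ E, (f * e = e ↔ f * u = u) := by
    intro u s hu hus f hf
    constructor
    · intro h
      rw [← hu, ← mul_assoc, h]
    · intro h
      rw [hMR _ hus f hf, ← mul_assoc, h]
  have hφM : ∀ n, φ n ∈ M := fun n => hrange ▸ Set.mem_range_self n
  have hφs : ∀ x ∈ M, ∃ n, φ n = x := fun x hx => by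
    rw [← hrange] at hx; exact hx
  have hee : e * e = e := hidem e heE
  -- the extension of a right congruence on `N` to `S`
  have hT : ∀ σ : N → N → Prop, IsRightCongruence σ → IsRightCongruence (fun x y : S =>
      H (e * x) (e * y) ∧ ∀ c m n, φ m = e * x * c → φ n = e * y * c → σ m n) := by
    intro σ hσ
    refine ⟨⟨?_, ?_, ?_⟩, ?_⟩
    · intro x
      refine ⟨hHcong.1.refl _, fun c m n h1 h2 => ?_⟩
      have : m = n := hinj (h1.trans h2.symm)
      rw [this]; exact hσ.1.refl _
    · rintro x y ⟨h1, h2⟩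
      exact ⟨hHcong.1.symm h1, fun c m n h3 h4 => hσ.1.symm (h2 c n m h4 h3)⟩
    · rintro x y z ⟨h1, h2⟩ ⟨h3, h4⟩
      refine ⟨hHcong.1.trans h1 h3, fun c m n h5 h6 => ?_⟩
      obtain ⟨k, hk⟩ := hφs (e * y * c) (hMtrans _ _ (hHcong.2 _ _ c h1) (h5 ▸ hφM m))
      exact hσ.1.trans (h2 c m k h5 hk) (h4 c k n hk h6)
    · rintro x y d ⟨h1, h2⟩
      refine ⟨?_, fun c m n h5 h6 => h2 (d * c) m n ?_ ?_⟩
      · rw [← mul_assoc, ← mul_assoc]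
        exact hHcong.2 _ _ d h1
      · rw [h5]; simp only [mul_assoc]
      · rw [h6]; simp only [mul_assoc]
  intro r hr a b
  obtain ⟨G, hGfin, hGr, hGr1, hGr2⟩ := hr
  obtain ⟨ρ, hρ⟩ := exists_rcongGenBy ((fun p : N × N => (φ p.1, φ p.2)) '' G)
  have hρfg : FGRightCongruence ρ := ⟨_, hGfin.image _, hρ⟩
  obtain ⟨hρc, hρ1, hρ2⟩ := hρ
  have hρH : ∀ x y, ρ x y → H x y := by
    refine hρ2 H hHcong ?_
    rintro _ ⟨⟨m, n⟩, _, rfl⟩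
    exact hHcong.1.trans (hHcong.1.symm ((hM _).1 (hφM m))) ((hM _).1 (hφM n))
  have hρr : ∀ m n, ρ (φ m) (φ n) → r m n := by
    intro m n h
    have := hρ2 _ (hT r hGr) ?_ _ _ h
    · refine this.2 1 m n ?_ ?_
      · rw [mul_one, hel _ (hφM m)]
      · rw [mul_one, hel _ (hφM n)]
    · rintro _ ⟨⟨m, n⟩, hmn, rfl⟩
      simp only
      rw [hel _ (hφM m), hel _ (hφM n)]
      refine ⟨hHcong.1.trans (hHcong.1.symm ((hM _).1 (hφM m))) ((hM _).1 (hφM n)), ?_⟩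
      intro c k l hk hl
      obtain ⟨t, ht⟩ := hφs (e * c) (key (φ m) (hφM m) c (hk ▸ hφM k))
      have hk' : k = m * t := hinj (by rw [hk, hmulφ, ht, ← key' _ (hφM m)])
      have hl' : l = n * t := hinj (by rw [hl, hmulφ, ht, ← key' _ (hφM n)])
      rw [hk', hl']
      exact hGr.2 _ _ _ (hGr1 _ hmn)
  have hrρ : ∀ m n, r m n → ρ (φ m) (φ n) := by
    refine hGr2 (fun m n => ρ (φ m) (φ n)) ⟨⟨fun x => hρc.1.refl _, fun h => hρc.1.symm h,
      fun h h' => hρc.1.trans h h'⟩, ?_⟩ ?_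
    · intro x y z h
      simp only [hmulφ]
      exact hρc.2 _ _ _ h
    · intro p hp
      exact hρ1 _ ⟨p, hp, rfl⟩
  obtain ⟨⟨C, hC⟩, K, hKfin, hKc, hK1, hK2⟩ := hS ρ hρfg (φ a) (φ b)
  refine ⟨?_, ?_⟩
  · have step : ∀ c : S, ∃ D : Finset N, c ∈ C →
        (∀ d ∈ D, (∃ s, r d (a * s)) ∧ (∃ t, r d (b * t))) ∧
        ∀ x s, ρ (φ x) (c * s) → ∃ d ∈ D, ∃ s', r x (d * s') := by
      intro c
      by_cases hc : c ∈ C ∧ ∃ x s, ρ (φ x) (c * s)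
      · obtain ⟨hcC, x₀, s₀, hxs⟩ := hc
        have hc' : c ∈ {x : S | (∃ s : S, ρ x (φ a * s)) ∧ (∃ t : S, ρ x (φ b * t))} := by
          rw [hC]
          refine Set.mem_iUnion₂.2 ⟨c, hcC, 1, ?_⟩
          rw [mul_one]; exact hρc.1.refl _
        obtain ⟨⟨s, hs⟩, ⟨t, ht⟩⟩ := hc'
        have huv : ρ (φ a * s) (φ b * t) := hρc.1.trans (hρc.1.symm hs) ht
        have hus : φ a * s * s₀ ∈ M :=
          hMtrans _ _ (hρH _ _ (hρc.1.trans hxs (hρc.2 _ _ s₀ hs))) (hφM x₀)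
        obtain ⟨p, q, hu, hv, hup, hvp⟩ := hd' (φ a * s) (φ b * t)
          (hR _ s₀ (by rw [← mul_assoc, hel _ (hφM a)]) hus) (hρH _ _ huv)
        obtain ⟨d, hdd⟩ := hφs _ hup
        refine ⟨{d}, fun _ => ⟨?_, ?_⟩⟩
        · intro d' hd'
          rw [Finset.mem_singleton] at hd'
          subst hd'
          constructor
          · obtain ⟨m, hm⟩ := hφs (e * (s * p)) (key _ (hφM a) _ (by rwa [← mul_assoc]))
            refine ⟨m, hρr _ _ ?_⟩
            rw [hdd, hmulφ, hm, ← key' _ (hφM a), mul_assoc]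
            exact hρc.1.refl _
          · obtain ⟨m, hm⟩ := hφs (e * (t * p)) (key _ (hφM b) _ (by rwa [← mul_assoc]))
            refine ⟨m, hρr _ _ ?_⟩
            rw [hdd, hmulφ, hm, ← key' _ (hφM b), ← mul_assoc]
            exact hρc.2 _ _ _ huv
        · intro x s' hx
          have h1 : ρ (φ x) (φ d * (q * s')) := by
            have h2 : φ d * (q * s') = φ a * s * s' := by
              rw [hdd]
              conv_rhs => rw [hu]
              simp only [mul_assoc]
            rw [h2]
            exact hρc.1.trans hx (hρc.2 _ _ _ hs)
          obtain ⟨m, hm⟩ := hφs (e * (q * s'))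
            (key _ (hφM d) _ (hMtrans _ _ (hρH _ _ h1) (hφM x)))
          refine ⟨d, Finset.mem_singleton_self _, m, hρr _ _ ?_⟩
          rw [hmulφ, hm, ← key' _ (hφM d)]
          exact h1
      · refine ⟨∅, fun hcC => ⟨by simp, fun x s h => ?_⟩⟩
        exact absurd ⟨hcC, x, s, h⟩ hc
    choose D hD using step
    refine ⟨C.biUnion D, ?_⟩
    ext x
    simp only [Set.mem_iUnion, Set.mem_setOf_eq, Finset.mem_biUnion]
    constructor
    · rintro ⟨⟨s, hs⟩, ⟨t, ht⟩⟩
      have hx : φ x ∈ {x : S | (∃ s : S, ρ x (φ a * s)) ∧ (∃ t : S, ρ x (φ b * t))} :=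
        ⟨⟨φ s, by rw [← hmulφ]; exact hrρ _ _ hs⟩, ⟨φ t, by rw [← hmulφ]; exact hrρ _ _ ht⟩⟩
      rw [hC] at hx
      obtain ⟨c, hcC, s', hs'⟩ := Set.mem_iUnion₂.1 hx
      obtain ⟨d, hdD, h⟩ := (hD c hcC).2 x s' hs'
      exact ⟨d, ⟨c, hcC, hdD⟩, h⟩
    · rintro ⟨d, ⟨c, hcC, hdD⟩, s, hs⟩
      obtain ⟨⟨u, hu⟩, ⟨v, hv⟩⟩ := (hD c hcC).1 d hdD
      refine ⟨⟨u * s, ?_⟩, ⟨v * s, ?_⟩⟩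
      · rw [← mul_assoc]; exact hGr.1.trans hs (hGr.2 _ _ _ hu)
      · rw [← mul_assoc]; exact hGr.1.trans hs (hGr.2 _ _ _ hv)
  · have step : ∀ k : S × S, ∃ D : Finset (N × N), k ∈ K →
        (∀ d ∈ D, r (a * d.1) (a * d.2)) ∧
        ∀ σ : N → N → Prop, IsRightCongruence σ → (∀ d ∈ D, σ d.1 d.2) →
          ∀ c m n, φ m = e * k.1 * c → φ n = e * k.2 * c → σ m n := by
      rintro ⟨u, v⟩
      by_cases hk : (u, v) ∈ K ∧ ∃ c, e * u * c ∈ M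
      · obtain ⟨hkK, c₀, hc₀⟩ := hk
        have huv : ρ (φ a * u) (φ a * v) := hK1 _ hkK
        have hH' : H (e * u) (e * v) := hHcong.1.trans (key1 _ (hφM a) u)
          (hHcong.1.trans (hρH _ _ huv) (hHcong.1.symm (key1 _ (hφM a) v)))
        obtain ⟨p, q, hu, hv, hup, hvp⟩ := hd' (e * u) (e * v)
          (hR _ c₀ (by rw [← mul_assoc, hee]) hc₀) hH'
        obtain ⟨x, hx⟩ := hφs _ hup
        obtain ⟨y, hy⟩ := hφs _ hvp
        refine ⟨{(x, y)}, fun _ => ⟨?_, ?_⟩⟩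
        · intro d hd'
          rw [Finset.mem_singleton] at hd'
          subst hd'
          apply hρr
          simp only [hmulφ, hx, hy]
          rw [mul_assoc e, mul_assoc e, ← key' _ (hφM a), ← key' _ (hφM a), ← mul_assoc,
            ← mul_assoc]
          exact hρc.2 _ _ _ huv
        · intro σ hσ hσ1 c m n hm hn
          have hσxy : σ x y := hσ1 (x, y) (Finset.mem_singleton_self _)
          have hm' : φ m = φ x * (q * c) := by
            rw [hm, hx]
            conv_lhs => rw [hu]
            simp only [mul_assoc]
          have hn' : φ n = φ y * (q * c) := by
            rw [hn, hy]
            conv_lhs => rw [hv]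
            simp only [mul_assoc]
          obtain ⟨t, ht⟩ := hφs (e * (q * c)) (key _ (hφM x) _ (hm' ▸ hφM m))
          have h1 : m = x * t := hinj (by rw [hm', hmulφ, ht, ← key' _ (hφM x)])
          have h2 : n = y * t := hinj (by rw [hn', hmulφ, ht, ← key' _ (hφM y)])
          rw [h1, h2]
          exact hσ.2 _ _ _ hσxy
      · refine ⟨∅, fun hkK => ⟨by simp, fun σ _ _ c m n hm _ => ?_⟩⟩
        exact absurd ⟨hkK, c, hm ▸ hφM m⟩ hk
    choose D hD using step
    refine ⟨⋃ k ∈ K, (D k : Set (N × N)), hKfin.biUnion fun k _ => (D k).finite_toSet,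
      ⟨⟨fun x => hGr.1.refl _, fun h => hGr.1.symm h, fun h h' => hGr.1.trans h h'⟩, ?_⟩, ?_, ?_⟩
    · intro x y z h
      simp only [← mul_assoc]
      exact hGr.2 _ _ _ h
    · intro p hp
      obtain ⟨k, hkK, hp⟩ := Set.mem_iUnion₂.1 hp
      exact (hD k hkK).1 p hp
    · intro σ hσ hσ1 x y hxy
      have h1 : ρ (φ a * φ x) (φ a * φ y) := by
        rw [← hmulφ, ← hmulφ]; exact hrρ _ _ hxy
      have := hK2 _ (hT σ hσ) ?_ _ _ h1
      · refine this.2 1 x y ?_ ?_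
        · rw [mul_one, hel _ (hφM x)]
        · rw [mul_one, hel _ (hφM y)]
      · intro k hkK
        refine ⟨?_, ?_⟩
        · exact hHcong.1.trans (key1 _ (hφM a) _)
            (hHcong.1.trans (hρH _ _ (hK1 _ hkK)) (hHcong.1.symm (key1 _ (hφM a) _)))
        · exact (hD k hkK).2 σ hσ fun d hd' => hσ1 d (Set.mem_iUnion₂.2 ⟨k, hkK, hd'⟩)
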